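/- Any covering of S^d by closed sets A₁, ..., A_m such that no A_i contains a pair of antipodal points (A_i ∩ (-A_i) = ∅ for all i) must use at least d+2 sets, i.e., m ≥ d+2. (Lusternik–Schnirelman theorem) -/

import Mathlib

open Pointwise

/-!
The combinatorial core is Tucker's lemma. Label the vertices of the Freudenthal triangulation of a
cube by `±i`, oddly on the boundary, and suppose that no edge has opposite labels at its ends. Call
a simplex of a coordinate subspace fully labelled if it carries all its edge directions and one
further label, and call a facet a door if it carries exactly the edge directions of the simplex. A
simplex has an odd number of doors if and only if it is fully labelled. Counted modulo 2, doors
shared by two simplices of an orthant cancel, doors on the boundary of the cube cancel under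
`x ↦ -x`, and the remaining ones, which lie in coordinate subspaces of one dimension less, are the
fully labelled simplices there. So their number has the same parity in every dimension; it is `1`
in dimension `0` and `0` in a dimension larger than that of the cube.

By compactness, labelling a fine grid turns Tucker's lemma into a statement about closed sets
`C (±i)` covering the cube and odd on its boundary: some `C i` meets `C (-i)`. If a sphere is
covered by closed sets without antipodal pairs, drop one of them; every point `x` of it has `-x` in
another one. Pulling back the remaining sets and their negatives to a cube, along a map into the
sphere that is odd on the boundary of the cube, contradicts this as soon as the number of remaining
sets is smaller than the dimension of the ambient space.
-/

open Finset Metric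

section ImageErase

variable {α β : Type*} [DecidableEq α] [DecidableEq β] {s : Finset α} {f : α → β} {t : Finset β}

theorem image_erase_eq_image_erase {i j : α} (hi : i ∈ s) (hj : j ∈ s) (hij : f i = f j) :
    (s.erase i).image f = (s.erase j).image f := by
  ext b
  simp only [mem_image, mem_erase]
  grind

theorem injOn_erase_of_image_erase_eq {i : α} (hcard : #s = #t + 1) (hi : i ∈ s)
    (him : (s.erase i).image f = t) : Set.InjOn f (s.erase i : Finset α) := by
  rw [← card_image_iff, him, card_erase_of_mem hi, hcard, Nat.add_sub_cancel]

theorem filter_image_erase_eq_singleton {i : α} (hcard : #s = #t + 1) (hi : i ∈ s)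
    (hit : f i ∉ t) (him : s.image f = insert (f i) t) :
    {j ∈ s | (s.erase j).image f = t} = {i} := by
  have hinj : Set.InjOn f s := by
    rw [← card_image_iff, him, card_insert_of_notMem hit, hcard]
  ext j
  simp only [mem_filter, mem_singleton]
  constructor
  · rintro ⟨-, rfl⟩
    by_contra hne
    exact hit (mem_image_of_mem f (mem_erase.mpr ⟨Ne.symm hne, hi⟩))
  · rintro rfl
    refine ⟨hi, ?_⟩
    rw [← erase_insert hit, ← him]
    ext b
    simp only [mem_image, mem_erase]
    grind [Set.InjOn]

theorem filter_image_erase_eq_pair {i j : α} (hcard : #s = #t + 1) (hi : i ∈ s) (hj : j ∈ s)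
    (hne : i ≠ j) (hij : f i = f j) (him : (s.erase i).image f = t) :
    {k ∈ s | (s.erase k).image f = t} = {i, j} := by
  ext k
  simp only [mem_filter, mem_insert, mem_singleton]
  constructor
  · rintro ⟨hk, hkt⟩
    by_contra! hkij
    exact hne (injOn_erase_of_image_erase_eq hcard hk hkt
      (mem_coe.mpr (mem_erase.mpr ⟨hkij.1.symm, hi⟩))
      (mem_coe.mpr (mem_erase.mpr ⟨hkij.2.symm, hj⟩)) hij)
  · rintro (rfl | rfl)
    · exact ⟨hi, him⟩
    · exact ⟨hj, (image_erase_eq_image_erase hj hi hij.symm).trans him⟩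

theorem sum_image_erase_eq_ite [Decidable (∃ b ∉ t, s.image f = insert b t)]
    (hcard : #s = #t + 1) :
    ∑ i ∈ s, (if (s.erase i).image f = t then (1 : ZMod 2) else 0) =
      if ∃ b ∉ t, s.image f = insert b t then 1 else 0 := by
  rw [sum_boole]
  split_ifs with h
  · obtain ⟨b, hb, him⟩ := h
    obtain ⟨i, hi, rfl⟩ := mem_image.mp (him ▸ mem_insert_self b t)
    rw [filter_image_erase_eq_singleton hcard hi hb him, card_singleton, Nat.cast_one]
  · obtain hempty | ⟨i, hi⟩ := {i ∈ s | (s.erase i).image f = t}.eq_empty_or_nonempty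
    · rw [hempty, card_empty, Nat.cast_zero]
    obtain ⟨his, him⟩ := mem_filter.mp hi
    have hit : f i ∈ t := by
      by_contra hit
      exact h ⟨f i, hit, by rw [← him, ← image_insert, insert_erase his]⟩
    obtain ⟨j, hj, hji⟩ := mem_image.mp (him.symm ▸ hit)
    obtain ⟨hne, hjs⟩ := mem_erase.mp hj
    rw [filter_image_erase_eq_pair hcard his hjs hne.symm hji.symm him, card_pair hne.symm]
    rfl

end ImageErase

/-- A coordinate direction `±eᵢ` of `ℤ^ι`, the sign being a unit of `ℤ`. These serve both as edge
directions of grid simplices and as the labels `±i` of Tucker's lemma. -/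
@[ext]
structure SignedIndex (ι : Type*) where
  index : ι
  sign : ℤˣ
deriving DecidableEq, Fintype

namespace SignedIndex

variable {ι : Type*}

instance : InvolutiveNeg (SignedIndex ι) where
  neg a := ⟨a.index, -a.sign⟩
  neg_neg a := by ext <;> simp

@[simp]
theorem index_neg (a : SignedIndex ι) : (-a).index = a.index := rfl

@[simp]
theorem sign_neg (a : SignedIndex ι) : (-a).sign = -a.sign := rfl

theorem neg_ne_self (a : SignedIndex ι) : -a ≠ a :=
  fun h => neg_units_ne_self a.sign (congrArg sign h)

theorem eq_neg_of_index_eq {a b : SignedIndex ι} (hindex : a.index = b.index) (hne : a ≠ b) :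
    a = -b :=
  SignedIndex.ext hindex <|
    Int.units_ne_iff_eq_neg.mp fun hsign => hne (SignedIndex.ext hindex hsign)

variable [DecidableEq ι]

/-- The lattice point at distance `n` from the origin on the coordinate half-axis `a`. -/
def ray (a : SignedIndex ι) (n : ℕ) : ι → ℤ :=
  Pi.single a.index (a.sign * n)

theorem ray_zero (a : SignedIndex ι) : a.ray 0 = 0 := by
  rw [ray, Nat.cast_zero, mul_zero, Pi.single_zero]

theorem ray_neg (a : SignedIndex ι) (n : ℕ) : (-a).ray n = -a.ray n := by
  simp only [ray, index_neg, sign_neg, Units.val_neg, neg_mul, Pi.single_neg]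

end SignedIndex

/-- Ordered `k`-simplices of the Freudenthal triangulation of the cube `[-(M + 1), M + 1]^ι`,
restricted to coordinate subspaces of dimension `k`. If `σ j = (a, v)`, then the `j`-th edge of `σ`
points in the direction `a`, and the absolute value of the coordinate `a.index` is `v` before that
edge and `v + 1` after it. Only the `GridSimplex.Nondegenerate` ones are geometric simplices. -/
abbrev GridSimplex (ι : Type*) (M k : ℕ) := Fin k → SignedIndex ι × Fin (M + 1)

namespace GridSimplex

variable {ι : Type*} {M k n : ℕ}

/-- The edges of the simplex point along pairwise different coordinate axes. -/
def Nondegenerate (σ : GridSimplex ι M k) : Prop :=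
  Function.Injective fun j => (σ j).1.index

/-- The image of the simplex under `x ↦ -x`. -/
def reflect (σ : GridSimplex ι M k) : GridSimplex ι M k := fun j => (-(σ j).1, (σ j).2)

theorem reflect_reflect (σ : GridSimplex ι M k) : σ.reflect.reflect = σ := by
  funext j
  simp only [reflect, neg_neg, Prod.mk.eta]

theorem reflect_cons (σ : GridSimplex ι M n) (a : SignedIndex ι) (v : Fin (M + 1)) :
    reflect (Fin.cons (a, v) σ : GridSimplex ι M (n + 1)) = Fin.cons (-a, v) σ.reflect := by
  funext j
  cases j using Fin.cases <;> simp [reflect]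

theorem nondegenerate_comp (σ : GridSimplex ι M k) (e : Equiv.Perm (Fin k)) :
    Nondegenerate (σ ∘ e) ↔ σ.Nondegenerate :=
  Function.Injective.of_comp_iff' (fun j => (σ j).1.index) e.bijective

theorem nondegenerate_cons (σ : GridSimplex ι M n) (a : SignedIndex ι) (v : Fin (M + 1)) :
    Nondegenerate (Fin.cons (a, v) σ : GridSimplex ι M (n + 1)) ↔
      σ.Nondegenerate ∧ ∀ j, (σ j).1.index ≠ a.index := by
  have hcomp := Fin.comp_cons (fun x : SignedIndex ι × Fin (M + 1) => x.1.index) (a, v) σ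
  simp only [Function.comp_def] at hcomp
  simp only [Nondegenerate, hcomp, Fin.cons_injective_iff, Set.mem_range, not_exists, and_comm,
    ne_eq]

theorem nondegenerate_snoc (σ : GridSimplex ι M n) (a : SignedIndex ι) (v : Fin (M + 1)) :
    Nondegenerate (Fin.snoc σ (a, v) : GridSimplex ι M (n + 1)) ↔
      σ.Nondegenerate ∧ ∀ j, (σ j).1.index ≠ a.index := by
  have hcomp := Fin.comp_snoc (fun x : SignedIndex ι × Fin (M + 1) => x.1.index) σ (a, v)
  simp only [Function.comp_def] at hcomp
  simp only [Nondegenerate, hcomp, Fin.snoc_injective_iff, Set.mem_range, not_exists, ne_eq]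

section Sums

variable [Fintype ι] {N : Type*} [AddCommMonoid N]

theorem sum_eq_sum_cons (F : GridSimplex ι M (n + 1) → N) :
    ∑ σ, F σ = ∑ p : SignedIndex ι × GridSimplex ι M n, ∑ v, F (Fin.cons (p.1, v) p.2) := by
  rw [← (Fin.consEquiv fun _ => SignedIndex ι × Fin (M + 1)).sum_comp]
  simp only [Fintype.sum_prod_type]
  exact sum_congr rfl fun a _ => sum_comm

theorem sum_eq_sum_snoc (F : GridSimplex ι M (n + 1) → N) :
    ∑ σ, F σ = ∑ p : SignedIndex ι × GridSimplex ι M n, ∑ v, F (Fin.snoc p.2 (p.1, v)) := by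
  rw [← (Fin.snocEquiv fun _ => SignedIndex ι × Fin (M + 1)).sum_comp]
  simp only [Fintype.sum_prod_type]
  exact sum_congr rfl fun a _ => sum_comm

end Sums

variable [DecidableEq ι]

instance (σ : GridSimplex ι M k) : Decidable σ.Nondegenerate :=
  inferInstanceAs (Decidable (Function.Injective _))

/-- The set of edge directions, which determines the orthant containing the simplex. -/
def directions (σ : GridSimplex ι M k) : Finset (SignedIndex ι) :=
  univ.image fun j => (σ j).1

/-- The `i`-th vertex, for `0 ≤ i ≤ k`: the one reached after the first `i` edges. -/
def vertex (σ : GridSimplex ι M k) (i : ℕ) : ι → ℤ :=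
  ∑ j : Fin k, (σ j).1.ray ((σ j).2 + if (j : ℕ) < i then 1 else 0)

theorem card_directions {σ : GridSimplex ι M k} (hσ : σ.Nondegenerate) : #σ.directions = k := by
  rw [directions, card_image_of_injective _ (hσ.of_comp (f := SignedIndex.index)), card_univ,
    Fintype.card_fin]

theorem vertex_apply_index {σ : GridSimplex ι M k} (hσ : σ.Nondegenerate) (i : ℕ) (j : Fin k) :
    σ.vertex i (σ j).1.index =
      (σ j).1.sign * (((σ j).2 + if (j : ℕ) < i then 1 else 0 : ℕ) : ℤ) := by
  rw [vertex, Finset.sum_apply, Fintype.sum_eq_single j]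
  · exact Pi.single_eq_same _ _
  · exact fun l hl => Pi.single_eq_of_ne (fun h => hl (hσ h.symm)) _

theorem vertex_apply_of_forall_ne (σ : GridSimplex ι M k) (i : ℕ) {c : ι}
    (hc : ∀ j, (σ j).1.index ≠ c) : σ.vertex i c = 0 := by
  rw [vertex, Finset.sum_apply]
  exact sum_eq_zero fun j _ => Pi.single_eq_of_ne (hc j).symm _

theorem norm_vertex_apply_index {σ : GridSimplex ι M k} (hσ : σ.Nondegenerate) (i : ℕ) (j : Fin k) :
    ‖σ.vertex i (σ j).1.index‖ = (σ j).2 + if (j : ℕ) < i then 1 else 0 := by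
  rw [vertex_apply_index hσ, norm_mul, Int.norm_coe_units, one_mul, Int.norm_natCast]
  push_cast
  rfl

section Norm

variable [Fintype ι] {σ : GridSimplex ι M k}

theorem norm_vertex_le (hσ : σ.Nondegenerate) (i : ℕ) : ‖σ.vertex i‖ ≤ M + 1 := by
  rw [pi_norm_le_iff_of_nonneg (by positivity)]
  intro c
  by_cases hc : ∃ j, (σ j).1.index = c
  · obtain ⟨j, rfl⟩ := hc
    rw [norm_vertex_apply_index hσ]
    have hv : ((σ j).2 : ℝ) ≤ M := by exact_mod_cast (σ j).2.is_le
    split_ifs <;> linarith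
  · push Not at hc
    rw [vertex_apply_of_forall_ne σ i hc, norm_zero]
    positivity

theorem dist_vertex_le_one (hσ : σ.Nondegenerate) (i i' : ℕ) :
    dist (σ.vertex i) (σ.vertex i') ≤ 1 := by
  rw [dist_pi_le_iff zero_le_one]
  intro c
  by_cases hc : ∃ j, (σ j).1.index = c
  · obtain ⟨j, rfl⟩ := hc
    rw [dist_eq_norm, vertex_apply_index hσ, vertex_apply_index hσ, ← mul_sub, norm_mul,
      Int.norm_coe_units, one_mul]
    split_ifs <;> simp
  · push Not at hc
    rw [vertex_apply_of_forall_ne σ i hc, vertex_apply_of_forall_ne σ i' hc, dist_self]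
    exact zero_le_one

theorem norm_vertex_eq (hσ : σ.Nondegenerate) {i : ℕ} {j : Fin k} (hji : (j : ℕ) < i)
    (hj : (σ j).2 = Fin.last M) : ‖σ.vertex i‖ = M + 1 := by
  refine (norm_vertex_le hσ i).antisymm ?_
  calc (M + 1 : ℝ) = ‖σ.vertex i (σ j).1.index‖ := by
        rw [norm_vertex_apply_index hσ, hj, if_pos hji, Fin.val_last]
    _ ≤ ‖σ.vertex i‖ := norm_le_pi_norm _ _

end Norm

section ConsSnoc

variable (σ : GridSimplex ι M n) (a : SignedIndex ι) (v : Fin (M + 1))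

theorem directions_cons :
    directions (Fin.cons (a, v) σ : GridSimplex ι M (n + 1)) = insert a σ.directions := by
  ext b
  simp only [directions, mem_image, mem_univ, true_and, mem_insert, Fin.exists_fin_succ,
    Fin.cons_zero, Fin.cons_succ, eq_comm]

theorem directions_snoc :
    directions (Fin.snoc σ (a, v) : GridSimplex ι M (n + 1)) = insert a σ.directions := by
  ext b
  simp only [directions, mem_image, mem_univ, true_and, mem_insert, Fin.exists_fin_succ',
    Fin.snoc_castSucc, Fin.snoc_last, eq_comm, or_comm]

theorem vertex_cons_succ (i : ℕ) :
    vertex (Fin.cons (a, v) σ : GridSimplex ι M (n + 1)) (i + 1) =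
      a.ray (v + 1) + σ.vertex i := by
  simp [vertex, Fin.sum_univ_succ]

theorem vertex_snoc {i : ℕ} (hi : i ≤ n) :
    vertex (Fin.snoc σ (a, v) : GridSimplex ι M (n + 1)) i = a.ray v + σ.vertex i := by
  simp [vertex, Fin.sum_univ_castSucc, not_lt.mpr hi, add_comm]

end ConsSnoc

theorem vertex_reflect (σ : GridSimplex ι M k) (i : ℕ) : σ.reflect.vertex i = -σ.vertex i := by
  simp only [vertex, reflect, SignedIndex.ray_neg, sum_neg_distrib]

theorem directions_reflect (σ : GridSimplex ι M k) :
    σ.reflect.directions = σ.directions.image Neg.neg := by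
  simp only [directions, reflect, image_image, Function.comp_def]

theorem directions_comp (σ : GridSimplex ι M k) (e : Equiv.Perm (Fin k)) :
    directions (σ ∘ e) = σ.directions := by
  ext b
  simp only [directions, mem_image, mem_univ, true_and]
  exact (e.surjective.exists (p := fun j => (σ j).1 = b)).symm

theorem vertex_comp_swap (σ : GridSimplex ι M k) {i j : ℕ} (hi : i + 1 < k) (hj : j ≠ i + 1) :
    vertex (σ ∘ Equiv.swap ⟨i, Nat.lt_of_succ_lt hi⟩ ⟨i + 1, hi⟩) j = σ.vertex j := by
  set e := Equiv.swap (⟨i, Nat.lt_of_succ_lt hi⟩ : Fin k) ⟨i + 1, hi⟩ with he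
  have hlt : ∀ l : Fin k, (e l : ℕ) < j ↔ (l : ℕ) < j := by
    intro l
    rw [he, Equiv.swap_apply_def]
    grind
  refine Fintype.sum_equiv e _ _ fun l => ?_
  simp only [Function.comp_apply, hlt]

section Labelling

variable (L : (ι → ℤ) → SignedIndex ι)

/-- The labels occurring on the facet opposite to the `i`-th vertex. -/
def facetLabels (σ : GridSimplex ι M k) (i : ℕ) : Finset (SignedIndex ι) :=
  ((range (k + 1)).erase i).image fun j => L (σ.vertex j)

/-- The `i`-th facet of the simplex is a door: it carries exactly the directions of the simplex as
labels. -/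
def IsDoor (σ : GridSimplex ι M k) (i : ℕ) : Prop :=
  σ.Nondegenerate ∧ σ.facetLabels L i = σ.directions

/-- The simplex is fully labelled: it carries all its directions and one more label. -/
def IsFullyLabelled (σ : GridSimplex ι M k) : Prop :=
  σ.Nondegenerate ∧ ∃ a ∉ σ.directions,
    (range (k + 1)).image (fun j => L (σ.vertex j)) = insert a σ.directions

instance (σ : GridSimplex ι M k) (i : ℕ) : Decidable (σ.IsDoor L i) :=
  inferInstanceAs (Decidable (_ ∧ _))

instance [Fintype ι] (σ : GridSimplex ι M k) : Decidable (σ.IsFullyLabelled L) :=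
  inferInstanceAs (Decidable (_ ∧ _))

theorem sum_isDoor [Fintype ι] (σ : GridSimplex ι M k) :
    ∑ i ∈ range (k + 1), (if σ.IsDoor L i then (1 : ZMod 2) else 0) =
      if σ.IsFullyLabelled L then 1 else 0 := by
  by_cases hσ : σ.Nondegenerate
  · simp only [IsDoor, IsFullyLabelled, hσ, true_and]
    exact sum_image_erase_eq_ite (by rw [card_range, card_directions hσ])
  · simp only [IsDoor, IsFullyLabelled, hσ, false_and, if_false, sum_const_zero]

theorem isDoor_comp_swap (σ : GridSimplex ι M k) {i : ℕ} (hi : i + 1 < k) :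
    IsDoor L (σ ∘ Equiv.swap ⟨i, Nat.lt_of_succ_lt hi⟩ ⟨i + 1, hi⟩) (i + 1) ↔
      σ.IsDoor L (i + 1) := by
  rw [IsDoor, IsDoor, nondegenerate_comp, directions_comp, facetLabels, facetLabels,
    image_congr fun j hj => congrArg L (vertex_comp_swap σ hi (mem_erase.mp hj).1)]

-- Exchanging the two edges at an interior vertex gives the other simplex with the same opposite
-- facet.
theorem sum_isDoor_of_interior [Fintype ι] {i : ℕ} (hi : i + 1 < k) :
    ∑ σ : GridSimplex ι M k, (if σ.IsDoor L (i + 1) then (1 : ZMod 2) else 0) = 0 := by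
  set e := Equiv.swap (⟨i, Nat.lt_of_succ_lt hi⟩ : Fin k) ⟨i + 1, hi⟩ with he
  refine sum_involution (fun σ _ => σ ∘ e) (fun σ _ => ?_) (fun σ _ hdoor hfix => ?_)
    (fun σ _ => mem_univ _) fun σ _ => ?_
  · rw [if_congr (isDoor_comp_swap L σ hi) rfl rfl]
    exact CharTwo.add_self_eq_zero _
  · have hσ : σ.Nondegenerate := by
      by_contra hσ
      exact hdoor (if_neg fun h => hσ h.1)
    have hindex := congrArg (fun x => x.1.index) (congrFun hfix ⟨i, Nat.lt_of_succ_lt hi⟩)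
    rw [Function.comp_apply, he, Equiv.swap_apply_left] at hindex
    exact absurd (Fin.mk.inj_iff.mp (hσ hindex)) (Nat.succ_ne_self i)
  · funext j
    simp only [Function.comp_apply, he, Equiv.swap_apply_self]

theorem facetLabels_cons_zero (σ : GridSimplex ι M n) (a : SignedIndex ι) (v : Fin (M + 1)) :
    facetLabels L (Fin.cons (a, v) σ : GridSimplex ι M (n + 1)) 0 =
      (range (n + 1)).image fun j => L (a.ray (v + 1) + σ.vertex j) := by
  have hrange : (range (n + 1 + 1)).erase 0 = (range (n + 1)).image Nat.succ := by
    rw [← sdiff_singleton_eq_erase, range_sdiff_zero]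
  rw [facetLabels, hrange, image_image]
  simp only [Function.comp_def, vertex_cons_succ]

theorem facetLabels_snoc_last (σ : GridSimplex ι M n) (a : SignedIndex ι) (v : Fin (M + 1)) :
    facetLabels L (Fin.snoc σ (a, v) : GridSimplex ι M (n + 1)) (n + 1) =
      (range (n + 1)).image fun j => L (a.ray v + σ.vertex j) := by
  rw [facetLabels, range_add_one, erase_insert notMem_range_self]
  exact image_congr fun j hj =>
    congrArg L (vertex_snoc σ a v (Nat.lt_succ_iff.mp (mem_range.mp hj)))

-- These are the two simplices on either side of a common facet.
theorem isDoor_cons_castSucc_zero (σ : GridSimplex ι M n) (a : SignedIndex ι) (v : Fin M) :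
    IsDoor L (Fin.cons (a, v.castSucc) σ : GridSimplex ι M (n + 1)) 0 ↔
      IsDoor L (Fin.snoc σ (a, v.succ) : GridSimplex ι M (n + 1)) (n + 1) := by
  rw [IsDoor, IsDoor, nondegenerate_cons, nondegenerate_snoc, directions_cons, directions_snoc,
    facetLabels_cons_zero, facetLabels_snoc_last, Fin.val_castSucc, Fin.val_succ]

theorem isDoor_snoc_zero_last (σ : GridSimplex ι M n) (a : SignedIndex ι) :
    IsDoor L (Fin.snoc σ (a, 0) : GridSimplex ι M (n + 1)) (n + 1) ↔
      (σ.Nondegenerate ∧ ∀ j, (σ j).1.index ≠ a.index) ∧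
        (range (n + 1)).image (fun j => L (σ.vertex j)) = insert a σ.directions := by
  rw [IsDoor, nondegenerate_snoc, directions_snoc, facetLabels_snoc_last]
  simp only [Fin.val_zero, SignedIndex.ray_zero, zero_add]

end Labelling

section Tucker

variable [Fintype ι] {L : (ι → ℤ) → SignedIndex ι}

theorem facetLabels_reflect_zero (hodd : ∀ x : ι → ℤ, ‖x‖ = M + 1 → L (-x) = -L x)
    {σ : GridSimplex ι M (n + 1)} (hσ : σ.Nondegenerate) (hlast : (σ 0).2 = Fin.last M) :
    σ.reflect.facetLabels L 0 = (σ.facetLabels L 0).image Neg.neg := by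
  rw [facetLabels, facetLabels, image_image]
  refine image_congr fun j hj => ?_
  have hpos : 0 < j := Nat.pos_of_ne_zero (mem_erase.mp hj).1
  rw [vertex_reflect, hodd _ (norm_vertex_eq hσ hpos hlast), Function.comp_apply]

theorem isDoor_reflect_zero (hodd : ∀ x : ι → ℤ, ‖x‖ = M + 1 → L (-x) = -L x)
    {σ : GridSimplex ι M (n + 1)} (hlast : (σ 0).2 = Fin.last M) :
    σ.reflect.IsDoor L 0 ↔ σ.IsDoor L 0 := by
  have hreflect : σ.reflect.Nondegenerate ↔ σ.Nondegenerate := Iff.rfl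
  rw [IsDoor, IsDoor, hreflect]
  refine and_congr_right fun hσ => ?_
  rw [facetLabels_reflect_zero hodd hσ hlast, directions_reflect,
    (image_injective neg_injective).eq_iff]

theorem sum_isDoor_cons_last_zero (hodd : ∀ x : ι → ℤ, ‖x‖ = M + 1 → L (-x) = -L x) :
    ∑ p : SignedIndex ι × GridSimplex ι M n,
      (if IsDoor L (Fin.cons (p.1, Fin.last M) p.2 : GridSimplex ι M (n + 1)) 0
        then (1 : ZMod 2) else 0) = 0 := by
  refine sum_involution (fun p _ => (-p.1, p.2.reflect)) (fun p _ => ?_)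
    (fun p _ _ hfix => p.1.neg_ne_self (congrArg Prod.fst hfix)) (fun p _ => mem_univ _)
    fun p _ => ?_
  · rw [← reflect_cons, if_congr (isDoor_reflect_zero hodd rfl) rfl rfl]
    exact CharTwo.add_self_eq_zero _
  · simp only [neg_neg, reflect_reflect]

theorem index_ne_of_image_eq_insert
    (hedge : ∀ x y : ι → ℤ, ‖x‖ ≤ M + 1 → ‖y‖ ≤ M + 1 → dist x y ≤ 1 → L x ≠ -L y)
    {σ : GridSimplex ι M n} (hσ : σ.Nondegenerate) {a : SignedIndex ι} (ha : a ∉ σ.directions)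
    (him : (range (n + 1)).image (fun j => L (σ.vertex j)) = insert a σ.directions) (j : Fin n) :
    (σ j).1.index ≠ a.index := by
  intro hindex
  have hj : (σ j).1 ∈ σ.directions := mem_image_of_mem _ (mem_univ j)
  have hneg : (σ j).1 = -a := SignedIndex.eq_neg_of_index_eq hindex fun h => ha (h ▸ hj)
  obtain ⟨p, -, hp⟩ := mem_image.mp (him.symm ▸ mem_insert_self a σ.directions)
  obtain ⟨q, -, hq⟩ := mem_image.mp (him.symm ▸ mem_insert_of_mem (b := a) hj)
  exact hedge _ _ (norm_vertex_le hσ q) (norm_vertex_le hσ p) (dist_vertex_le_one hσ q p)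
    (by rw [hp, hq, hneg])

theorem sum_isDoor_snoc_zero_last
    (hedge : ∀ x y : ι → ℤ, ‖x‖ ≤ M + 1 → ‖y‖ ≤ M + 1 → dist x y ≤ 1 → L x ≠ -L y)
    (σ : GridSimplex ι M n) :
    ∑ a, (if IsDoor L (Fin.snoc σ (a, 0) : GridSimplex ι M (n + 1)) (n + 1)
      then (1 : ZMod 2) else 0) = if σ.IsFullyLabelled L then 1 else 0 := by
  simp only [isDoor_snoc_zero_last]
  split_ifs with hfull
  · obtain ⟨hσ, a, ha, him⟩ := hfull
    rw [Fintype.sum_eq_single a]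
    · exact if_pos ⟨⟨hσ, index_ne_of_image_eq_insert hedge hσ ha him⟩, him⟩
    · rintro b hne
      refine if_neg fun h => ?_
      rw [him] at h
      exact hne (((mem_insert.mp (h.2 ▸ mem_insert_self a _)).resolve_right ha).symm)
  · refine sum_eq_zero fun a _ => if_neg fun h => hfull ⟨h.1.1, a, fun ha => ?_, h.2⟩
    obtain ⟨j, -, hj⟩ := mem_image.mp ha
    exact h.1.2 j (congrArg SignedIndex.index hj)

theorem sum_isFullyLabelled_succ (hodd : ∀ x : ι → ℤ, ‖x‖ = M + 1 → L (-x) = -L x)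
    (hedge : ∀ x y : ι → ℤ, ‖x‖ ≤ M + 1 → ‖y‖ ≤ M + 1 → dist x y ≤ 1 → L x ≠ -L y) (n : ℕ) :
    ∑ σ : GridSimplex ι M (n + 1), (if σ.IsFullyLabelled L then (1 : ZMod 2) else 0) =
      ∑ σ : GridSimplex ι M n, if σ.IsFullyLabelled L then 1 else 0 := by
  have hfirst : ∑ σ : GridSimplex ι M (n + 1), (if σ.IsDoor L 0 then (1 : ZMod 2) else 0) =
      ∑ p : SignedIndex ι × GridSimplex ι M n, ∑ v : Fin M,
        if IsDoor L (Fin.snoc p.2 (p.1, v.succ) : GridSimplex ι M (n + 1)) (n + 1)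
          then 1 else 0 := by
    simp only [sum_eq_sum_cons, Fin.sum_univ_castSucc, sum_add_distrib,
      isDoor_cons_castSucc_zero, sum_isDoor_cons_last_zero hodd, add_zero]
  have hlast : ∑ σ : GridSimplex ι M (n + 1),
        (if σ.IsDoor L (n + 1) then (1 : ZMod 2) else 0) =
      ∑ σ : GridSimplex ι M n, (if σ.IsFullyLabelled L then 1 else 0) +
      ∑ p : SignedIndex ι × GridSimplex ι M n, ∑ v : Fin M,
        if IsDoor L (Fin.snoc p.2 (p.1, v.succ) : GridSimplex ι M (n + 1)) (n + 1)
          then 1 else 0 := by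
    simp only [sum_eq_sum_snoc, Fin.sum_univ_succ, sum_add_distrib]
    rw [Fintype.sum_prod_type_right]
    simp only [sum_isDoor_snoc_zero_last hedge]
  simp only [← sum_isDoor]
  rw [sum_comm, sum_range_succ, sum_range_succ', hfirst, hlast,
    sum_eq_zero fun i hi => sum_isDoor_of_interior L (Nat.succ_lt_succ (mem_range.mp hi)),
    zero_add, add_left_comm, CharTwo.add_self_eq_zero, add_zero]
  simp only [← sum_isDoor]

theorem sum_isFullyLabelled (hodd : ∀ x : ι → ℤ, ‖x‖ = M + 1 → L (-x) = -L x)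
    (hedge : ∀ x y : ι → ℤ, ‖x‖ ≤ M + 1 → ‖y‖ ≤ M + 1 → dist x y ≤ 1 → L x ≠ -L y) (n : ℕ) :
    ∑ σ : GridSimplex ι M n, (if σ.IsFullyLabelled L then (1 : ZMod 2) else 0) = 1 := by
  induction n with
  | zero =>
    rw [Fintype.sum_unique, if_pos]
    exact ⟨fun j => j.elim0, L (vertex default 0), notMem_empty _, rfl⟩
  | succ n ih => rw [sum_isFullyLabelled_succ hodd hedge, ih]

end Tucker

end GridSimplex

open GridSimplex in
/-- Tucker's lemma, except that it asserts only `dist x y ≤ 1` and not that `x` and `y` span an edge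
of the triangulation. -/
theorem exists_complementary_edge {ι : Type*} [Fintype ι] {M : ℕ}
    {L : (ι → ℤ) → SignedIndex ι} (hodd : ∀ x : ι → ℤ, ‖x‖ = M + 1 → L (-x) = -L x) :
    ∃ x y : ι → ℤ, ‖x‖ ≤ M + 1 ∧ ‖y‖ ≤ M + 1 ∧ dist x y ≤ 1 ∧ L x = -L y := by
  classical
  by_contra! hedge
  have hnot : ∀ σ : GridSimplex ι M (Fintype.card ι + 1), ¬ σ.IsFullyLabelled L := fun σ hσ =>
    Nat.not_succ_le_self (Fintype.card ι) (by simpa using Fintype.card_le_of_injective _ hσ.1)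
  simpa [hnot] using sum_isFullyLabelled hodd hedge (Fintype.card ι + 1)

theorem exists_odd_choice {β : Type*} [InvolutiveNeg β] [Nonempty β] :
    ∃ g : Set β → β, ∀ S : Set β, S.Nonempty → (∀ b ∈ S, -b ∉ S) → g S ∈ S ∧ g (-S) = -g S := by
  classical
  -- `h` is even because `S ∪ -S` is, and at most one of `h S`, `-h S` lies in `S`.
  set h : Set β → β := fun S => Classical.epsilon (· ∈ S ∪ -S) with hh
  have hmem : ∀ S : Set β, S.Nonempty → h S ∈ S ∪ -S := fun S hS =>
    Classical.epsilon_spec (hS.mono Set.subset_union_left)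
  have heven : ∀ S, h (-S) = h S := fun S => by simp only [hh, neg_neg, Set.union_comm]
  refine ⟨fun S => if h S ∈ S then h S else -h S, fun S hS hdisj => ?_⟩
  have hmem_neg : h S ∈ -S ↔ h S ∉ S :=
    ⟨fun hneg hpos => hdisj _ hpos hneg, (hmem S hS).resolve_left⟩
  by_cases hpos : h S ∈ S
  · simp only [hmem_neg, hpos, not_true, if_true, if_false, heven, and_self]
  · simp only [hmem_neg, hpos, not_false_iff, if_true, if_false, heven, neg_neg, and_true]
    exact (hmem S hS).resolve_left hpos

theorem exists_forall_one_div_lt_dist {κ X : Type*} [Finite κ] [PseudoMetricSpace X]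
    {K F : κ → Set X} (hK : ∀ i, IsCompact (K i)) (hF : ∀ i, IsClosed (F i))
    (hdisj : ∀ i, Disjoint (K i) (F i)) :
    ∃ M : ℕ, ∀ i, ∀ x ∈ K i, ∀ y ∈ F i, 1 / ((M : ℝ) + 1) < dist x y := by
  refine (Filter.eventually_all.mpr fun i => ?_ : ∀ᶠ M : ℕ in Filter.atTop, _).exists
  obtain ⟨r, hr, hlt⟩ := exists_pos_forall_lt_edist (hK i) (hF i) (hdisj i)
  filter_upwards [(tendsto_one_div_add_atTop_nhds_zero_nat (𝕜 := ℝ)).eventually_lt_const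
    (NNReal.coe_pos.mpr hr)] with M hM x hx y hy
  have hdist : r < nndist x y := by exact_mod_cast edist_nndist x y ▸ hlt x hx y hy
  exact hM.trans (by exact_mod_cast hdist)

section Cube

variable {ι : Type*}

/-- The point of the unit cube `[-1, 1]^ι` that corresponds to a lattice point of the cube
`[-(M + 1), M + 1]^ι`. -/
noncomputable def gridPoint (M : ℕ) (x : ι → ℤ) : ι → ℝ := fun i => x i / (M + 1)

theorem gridPoint_neg (M : ℕ) (x : ι → ℤ) : gridPoint M (-x) = -gridPoint M x := by
  funext i
  simp only [gridPoint, Pi.neg_apply, Int.cast_neg, neg_div]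

variable [Fintype ι]

theorem dist_gridPoint (M : ℕ) (x y : ι → ℤ) :
    dist (gridPoint M x) (gridPoint M y) = dist x y / (M + 1) := by
  have hsmul : ∀ z : ι → ℤ, gridPoint M z = ((M : ℝ) + 1)⁻¹ • fun i => (z i : ℝ) := fun z =>
    funext fun i => div_eq_inv_mul _ _
  have hcast : dist (fun i => (x i : ℝ)) (fun i => (y i : ℝ)) = dist x y := by
    simp only [dist_pi_def, nndist_dist, Int.dist_cast_real]
  rw [hsmul, hsmul, dist_smul₀, hcast, norm_inv, Real.norm_of_nonneg (by positivity),
    inv_mul_eq_div]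

theorem norm_gridPoint (M : ℕ) (x : ι → ℤ) : ‖gridPoint M x‖ = ‖x‖ / (M + 1) := by
  have hzero : gridPoint M (0 : ι → ℤ) = 0 := by
    funext i
    simp [gridPoint]
  simpa [hzero] using dist_gridPoint M x 0

theorem gridPoint_mem_closedBall {M : ℕ} {x : ι → ℤ} (hx : ‖x‖ ≤ M + 1) :
    gridPoint M x ∈ closedBall 0 1 := by
  rw [mem_closedBall_zero_iff, norm_gridPoint]
  exact div_le_one_of_le₀ hx (by positivity)

theorem exists_mem_and_mem_neg_of_closedBall_subset_iUnion {C : SignedIndex ι → Set (ι → ℝ)}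
    (hclosed : ∀ a, IsClosed (C a)) (hcover : closedBall 0 1 ⊆ ⋃ a, C a)
    (hodd : ∀ p : ι → ℝ, ‖p‖ = 1 → ∀ a, p ∈ C a → -p ∈ C (-a)) :
    ∃ a p, p ∈ closedBall 0 1 ∧ p ∈ C a ∧ p ∈ C (-a) := by
  by_contra! hdisj
  obtain ⟨M, hM⟩ := exists_forall_one_div_lt_dist
    (K := fun a => closedBall 0 1 ∩ C a) (F := fun a => closedBall 0 1 ∩ C (-a))
    (fun a => (isCompact_closedBall 0 1).inter_right (hclosed a))
    (fun a => isClosed_closedBall.inter (hclosed (-a)))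
    (fun a => Set.disjoint_left.mpr fun p hp hp' => hdisj a p hp.1 hp.2 hp'.2)
  obtain ⟨a₀, -⟩ := Set.mem_iUnion.mp (hcover (mem_closedBall_self zero_le_one))
  have : Nonempty (SignedIndex ι) := ⟨a₀⟩
  obtain ⟨g, hg⟩ := exists_odd_choice (β := SignedIndex ι)
  have hgC : ∀ p : ι → ℝ, p ∈ closedBall 0 1 → p ∈ C (g {a | p ∈ C a}) ∧
      g (-{a | p ∈ C a}) = -g {a | p ∈ C a} := fun p hp =>
    hg _ (Set.mem_iUnion.mp (hcover hp)) fun a => hdisj a p hp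
  let L : (ι → ℤ) → SignedIndex ι := fun x => g {a | gridPoint M x ∈ C a}
  have hLodd : ∀ x : ι → ℤ, ‖x‖ = M + 1 → L (-x) = -L x := by
    intro x hx
    change g {a | gridPoint M (-x) ∈ C a} = -g {a | gridPoint M x ∈ C a}
    have hnorm : ‖gridPoint M x‖ = 1 := by
      rw [norm_gridPoint, hx, div_self (by positivity)]
    have hset : {a | gridPoint M (-x) ∈ C a} = -{a | gridPoint M x ∈ C a} := by
      ext a
      rw [gridPoint_neg, Set.mem_neg, Set.mem_ofPred_eq, Set.mem_ofPred_eq]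
      refine ⟨fun h => ?_, fun h => neg_neg a ▸ hodd _ hnorm _ h⟩
      simpa only [neg_neg] using hodd _ (by rwa [norm_neg]) _ h
    rw [hset, (hgC _ (gridPoint_mem_closedBall hx.le)).2]
  obtain ⟨x, y, hx, hy, hxy, hL⟩ := exists_complementary_edge hLodd
  have hxC : gridPoint M x ∈ C (L x) := (hgC _ (gridPoint_mem_closedBall hx)).1
  have hyC : gridPoint M y ∈ C (L y) := (hgC _ (gridPoint_mem_closedBall hy)).1
  rw [← neg_eq_iff_eq_neg.mpr hL] at hyC
  have hlt := hM _ _ ⟨gridPoint_mem_closedBall hx, hxC⟩ _ ⟨gridPoint_mem_closedBall hy, hyC⟩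
  rw [dist_gridPoint] at hlt
  exact hlt.not_ge (by gcongr)

end Cube

section Sphere

variable {E : Type*} [NormedAddCommGroup E] [NormedSpace ℝ E]

theorem exists_continuous_odd_map_sphere {ι : Type*} [Fintype ι]
    (hrank : (Fintype.card ι : Cardinal) < Module.rank ℝ E) :
    ∃ φ : (ι → ℝ) → E, Continuous φ ∧ (∀ p, ‖φ p‖ = 1) ∧ ∀ p, ‖p‖ = 1 → φ (-p) = -φ p := by
  obtain ⟨T, hT⟩ : ∃ T : (ι → ℝ) × ℝ →ₗ[ℝ] E, Function.Injective T := by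
    have hle : ((Fintype.card ι + 1 : ℕ) : Cardinal) ≤ Module.rank ℝ E := by
      rw [Nat.cast_add_one, ← Cardinal.succ_natCast]
      exact Order.succ_le_of_lt hrank
    obtain ⟨T, hT⟩ := Module.le_rank_iff_exists_linearMap.mp hle
    have e : ((ι → ℝ) × ℝ) ≃ₗ[ℝ] (Fin (Fintype.card ι + 1) → ℝ) :=
      LinearEquiv.ofFinrankEq _ _ (by simp)
    exact ⟨T ∘ₗ e.toLinearMap, hT.comp e.injective⟩
  have hcont : Continuous fun p : ι → ℝ => T (p, 1 - ‖p‖) :=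
    T.continuous_of_finiteDimensional.comp (by fun_prop)
  have hne : ∀ p : ι → ℝ, T (p, 1 - ‖p‖) ≠ 0 := by
    intro p hp
    obtain ⟨rfl, hnorm⟩ := Prod.mk_eq_zero.mp ((map_eq_zero_iff T hT).mp hp)
    simp at hnorm
  refine ⟨fun p => NormedSpace.normalize (T (p, 1 - ‖p‖)), ?_, fun p =>
    NormedSpace.norm_normalize (hne p), fun p hp => ?_⟩
  · exact (hcont.norm.inv₀ fun p => norm_ne_zero_iff.mpr (hne p)).smul hcont
  · change NormedSpace.normalize (T (-p, 1 - ‖-p‖)) = -NormedSpace.normalize (T (p, 1 - ‖p‖))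
    rw [← NormedSpace.normalize_neg, ← map_neg, Prod.neg_mk, norm_neg, hp, sub_self, neg_zero]

theorem stmt6_general [Nontrivial E] {κ : Type*} [Fintype κ] {A : κ → Set E}
    (hclosed : ∀ i, IsClosed (A i))
    (hantipodal : ∀ i, ∀ x ∈ sphere (0 : E) 1, x ∈ A i → -x ∉ A i)
    (hcover : sphere (0 : E) 1 ⊆ ⋃ i, A i) :
    Module.rank ℝ E < Fintype.card κ := by
  classical
  by_contra! hcard
  have hmem : ∀ x : E, ‖x‖ = 1 → ∃ i, x ∈ A i := fun x hx =>
    Set.mem_iUnion.mp (hcover (mem_sphere_zero_iff_norm.mpr hx))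
  obtain ⟨x₀, hx₀⟩ := exists_norm_eq E zero_le_one
  obtain ⟨i₀, -⟩ := hmem x₀ hx₀
  obtain ⟨φ, hφ, hnorm, hodd⟩ := exists_continuous_odd_map_sphere (E := E) (ι := {i // i ≠ i₀})
    (lt_of_lt_of_le (by exact_mod_cast Fintype.card_subtype_lt (x := i₀) (by simp)) hcard)
  let C : SignedIndex {i // i ≠ i₀} → Set ({i // i ≠ i₀} → ℝ) := fun a =>
    {p | a.sign • φ p ∈ A a.index}
  have hCclosed : ∀ a, IsClosed (C a) := fun a =>
    (hclosed a.index).preimage (hφ.const_smul a.sign)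
  have hCcover : ∀ p, p ∈ ⋃ a, C a := by
    intro p
    rw [Set.mem_iUnion]
    obtain ⟨i, hi⟩ := hmem (φ p) (hnorm p)
    obtain ⟨j, hj⟩ := hmem (-φ p) (by rw [norm_neg, hnorm])
    by_cases hi₀ : i = i₀
    · have hj₀ : j ≠ i₀ := by
        rintro rfl
        exact hantipodal i _ (mem_sphere_zero_iff_norm.mpr (hnorm p)) hi (hi₀ ▸ hj)
      exact ⟨⟨⟨j, hj₀⟩, -1⟩, by simpa [C] using hj⟩
    · exact ⟨⟨⟨i, hi₀⟩, 1⟩, by simpa [C] using hi⟩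
  have hCodd : ∀ p, ‖p‖ = 1 → ∀ a, p ∈ C a → -p ∈ C (-a) := fun p hp a ha => by
    simpa [C, hodd p hp, Units.neg_smul] using ha
  obtain ⟨a, p, -, hpos, hneg⟩ :=
    exists_mem_and_mem_neg_of_closedBall_subset_iUnion hCclosed (fun p _ => hCcover p) hCodd
  have hsphere : a.sign • φ p ∈ sphere (0 : E) 1 := by
    rw [mem_sphere_zero_iff_norm]
    rcases Int.units_eq_one_or a.sign with hsign | hsign <;>
      simp only [hsign, one_smul, Units.neg_smul, norm_neg, hnorm]
  refine hantipodal a.index _ hsphere hpos ?_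
  simpa only [C, Set.mem_ofPred_eq, SignedIndex.sign_neg, SignedIndex.index_neg,
    Units.neg_smul] using hneg

end Sphere

/-- Lusternik–Schnirelman theorem: any covering of `S^d` by closed sets `A₁,…,A_m`, none of
which contains a pair of antipodal points, uses at least `d + 2` sets. -/
theorem stmt6 (d m : ℕ)
    (A : Fin m → Set (EuclideanSpace ℝ (Fin (d + 1))))
    (hclosed : ∀ i, IsClosed (A i))
    (hsub : ∀ i, A i ⊆ Metric.sphere (0 : EuclideanSpace ℝ (Fin (d + 1))) 1)
    (hdisj : ∀ i, A i ∩ (-A i) = ∅)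
    (hcover : Metric.sphere (0 : EuclideanSpace ℝ (Fin (d + 1))) 1 ⊆ ⋃ i, A i) :
    d + 2 ≤ m := by
  have hrank := stmt6_general hclosed
    (fun i _ _ hx hnx => (hdisj i).subset ⟨hx, hnx⟩) hcover
  rw [← Module.finrank_eq_rank, finrank_euclideanSpace_fin, Fintype.card_fin] at hrank
  exact_mod_cast hrank
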